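/- Let d ≥ 2, α ∈ (1,2), T > 0, and for 0 < t ≤ T let (P_t φ)(x) = ∫_{ℝ^d} φ(x + y) p_t(y) dy, where p_t(x) = (2π)^{−d} ∫_{ℝ^d} cos(⟨x,u⟩) e^{−tΨ(u)} du and Ψ(u) = ∫_{|y|≤1} (1 − cos(⟨u,y⟩)) |y|^{−(d+α)} dy. Then there exists a constant C < ∞ (depending only on d, α, T) such that for every bounded continuously differentiable φ : ℝ^d → ℝ with bounded gradient and every 0 < t ≤ T, P_t φ is twice continuously differentiable and ‖D²(P_t φ)‖_∞ ≤ C ‖Dφ‖_∞ t^{−1/α}, where ‖Dφ‖_∞ = sup_{x∈ℝ^d} |Dφ(x)| is the supremum norm of the gradient and ‖D²(P_t φ)‖_∞ the supremum norm of the Hessian. -/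

import Mathlib

open MeasureTheory Metric
open scoped RealInnerProductSpace

/-- Characteristic exponent of the truncated `α`-stable process. -/
noncomputable def Psi (d : ℕ) (α : ℝ) (u : EuclideanSpace ℝ (Fin d)) : ℝ :=
  ∫ y in Metric.closedBall (0 : EuclideanSpace ℝ (Fin d)) 1,
    (1 - Real.cos ⟪u, y⟫) / ‖y‖ ^ ((d : ℝ) + α)

/-- Transition density of the truncated `α`-stable process, via Fourier inversion. -/
noncomputable def pdens (d : ℕ) (α : ℝ) (t : ℝ) (x : EuclideanSpace ℝ (Fin d)) : ℝ :=
  ((2 * Real.pi) ^ d)⁻¹ *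
    ∫ u : EuclideanSpace ℝ (Fin d), Real.cos ⟪x, u⟫ * Real.exp (-t * Psi d α u)

/-- The semigroup `(P_t φ)(x) = ∫ φ(x+y) p_t(y) dy`. -/
noncomputable def Pt (d : ℕ) (α : ℝ) (φ : EuclideanSpace ℝ (Fin d) → ℝ) (t : ℝ)
    (x : EuclideanSpace ℝ (Fin d)) : ℝ :=
  ∫ y : EuclideanSpace ℝ (Fin d), φ (x + y) * pdens d α t y

/-!
Put `r = (t / T) ^ (1 / α) ≤ 1`. Scaling turns `T Ψ(r u)` into `t` times the integral of
`(1 - cos⟨u, y⟩) |y|^{-(d+α)}` over `|y| ≤ r`, so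

`exp (-t Ψ(u)) = exp (-T Ψ(r u)) · μ̂(u)`,

where `μ` is the compound Poisson law of the jumps of size in `(r, 1]` made up to time `t`. Hence
`p_t` is the convolution of `μ` with the dilate `r^{-d} p_T(· / r)`, and convolving with a
probability measure does not increase the `L¹` norm of the gradient:
`‖∇p_t‖₁ ≤ r⁻¹ ‖∇p_T‖₁ = C t^{-1/α}`. All densities are Schwartz functions, because `Ψ` has
temperate growth and `Ψ(u) ≥ c |u|^α - c`. Finally
`D²(P_t φ)(x) = -∫ Dφ(x + y) ⊗ ∇p_t(y) dy`: one derivative falls on `φ`, the other one on `p_t`.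
-/

open Filter Function
open scoped ContDiff SchwartzMap FourierTransform

universe u

section OscillatoryIntegrals

/-- Smooth functions of a real variable whose `j`-th derivative is dominated by `|s| ^ (k - j)`.
The subtraction is truncated: all derivatives of order at least `k` are bounded by `1`. The
example that matters here is `1 - cos` with `k = 2`. -/
structure HasDerivPowBound (h : ℝ → ℝ) (k : ℕ) : Prop where
  contDiff : ContDiff ℝ ∞ h
  abs_iteratedDeriv_le (j : ℕ) (s : ℝ) : |iteratedDeriv j h s| ≤ |s| ^ (k - j)

namespace HasDerivPowBound

variable {h : ℝ → ℝ} {k : ℕ}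

theorem abs_le (hh : HasDerivPowBound h k) (s : ℝ) : |h s| ≤ |s| ^ k := by
  simpa using hh.abs_iteratedDeriv_le 0 s

theorem deriv (hh : HasDerivPowBound h k) : HasDerivPowBound (deriv h) (k - 1) where
  contDiff := (contDiff_infty_iff_deriv.1 hh.contDiff).2
  abs_iteratedDeriv_le j s := by
    rw [← iteratedDeriv_succ', Nat.sub_sub, Nat.add_comm 1 j]
    exact hh.abs_iteratedDeriv_le (j + 1) s

theorem hasDerivAt (hh : HasDerivPowBound h k) (s : ℝ) : HasDerivAt h (_root_.deriv h s) s :=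
  ((contDiff_infty_iff_deriv.1 hh.contDiff).1 s).hasDerivAt

end HasDerivPowBound

theorem hasDerivPowBound_one_sub_cos : HasDerivPowBound (fun s => 1 - Real.cos s) 2 where
  contDiff := contDiff_const.sub Real.contDiff_cos
  abs_iteratedDeriv_le j s := by
    have hderiv : deriv (fun s => 1 - Real.cos s) = Real.sin := by
      funext s
      simp
    match j with
    | 0 =>
      rw [iteratedDeriv_zero, abs_of_nonneg (by linarith [Real.cos_le_one s]), sq_abs]
      linarith [Real.one_sub_sq_div_two_le_cos (x := s), sq_nonneg s]
    | 1 => simpa [hderiv] using Real.abs_sin_le_abs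
    | j + 2 =>
      rw [iteratedDeriv_succ', hderiv]
      simpa using Real.abs_iteratedDeriv_sin_le_one (j + 1) s

variable {E F : Type u} [NormedAddCommGroup E] [InnerProductSpace ℝ E]
  [NormedAddCommGroup F] [NormedSpace ℝ F] {h : ℝ → ℝ} {k : ℕ}

theorem norm_comp_inner_smul_le (hh : HasDerivPowBound h k) (u y : E) (v : F) :
    ‖h ⟪u, y⟫ • v‖ ≤ ‖u‖ ^ k * (‖y‖ ^ k * ‖v‖) := by
  rw [norm_smul, ← mul_assoc, ← mul_pow]
  gcongr
  exact (hh.abs_le _).trans (by gcongr; exact abs_real_inner_le_norm u y)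

theorem norm_innerSL_smulRight (y : E) (v : F) :
    ‖(innerSL ℝ y).smulRight v‖ = ‖y‖ * ‖v‖ := by
  rw [ContinuousLinearMap.norm_smulRight_apply, innerSL_apply_norm]

variable [MeasurableSpace E] {μ : Measure E} {f : E → F}

theorem norm_integral_comp_inner_smul_le (hh : HasDerivPowBound h k)
    (hint : Integrable (fun y => ‖y‖ ^ k * ‖f y‖) μ) (u : E) :
    ‖∫ y, h ⟪u, y⟫ • f y ∂μ‖ ≤ (∫ y, ‖y‖ ^ k * ‖f y‖ ∂μ) * ‖u‖ ^ k := by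
  rw [mul_comm, ← integral_const_mul]
  exact norm_integral_le_of_norm_le (hint.const_mul _)
    (.of_forall fun y => norm_comp_inner_smul_le hh u y (f y))

variable [BorelSpace E]

theorem aestronglyMeasurable_comp_inner_smul (hh : Continuous h)
    (hf : AEStronglyMeasurable f μ) (u : E) :
    AEStronglyMeasurable (fun y => h ⟪u, y⟫ • f y) μ :=
  (by fun_prop : Continuous fun y => h ⟪u, y⟫).aestronglyMeasurable.smul hf

theorem integrable_comp_inner_smul (hh : HasDerivPowBound h k) (hf : AEStronglyMeasurable f μ)
    (hint : Integrable (fun y => ‖y‖ ^ k * ‖f y‖) μ) (u : E) :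
    Integrable (fun y => h ⟪u, y⟫ • f y) μ :=
  (hint.const_mul (‖u‖ ^ k)).mono'
    (aestronglyMeasurable_comp_inner_smul hh.contDiff.continuous hf u)
    (.of_forall fun y => norm_comp_inner_smul_le hh u y (f y))

variable [SecondCountableTopology E]

theorem aestronglyMeasurable_innerSL_smulRight (hf : AEStronglyMeasurable f μ) :
    AEStronglyMeasurable (fun y => (innerSL ℝ y).smulRight (f y)) μ :=
  (by fun_prop : Continuous fun p : E × F =>
    (innerSL ℝ p.1).smulRight p.2).comp_aestronglyMeasurable
    (continuous_id.aestronglyMeasurable.prodMk hf)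

theorem hasFDerivAt_integral_comp_inner_smul (hh : HasDerivPowBound h k)
    (hf : AEStronglyMeasurable f μ)
    (hint : ∀ j, k ≤ j → Integrable (fun y => ‖y‖ ^ j * ‖f y‖) μ) (u : E) :
    HasFDerivAt (fun u => ∫ y, h ⟪u, y⟫ • f y ∂μ)
      (∫ y, deriv h ⟪u, y⟫ • (innerSL ℝ y).smulRight (f y) ∂μ) u := by
  refine hasFDerivAt_integral_of_dominated_of_fderiv_le
    (bound := fun y => (‖u‖ + 1) ^ (k - 1) * (‖y‖ ^ (k - 1 + 1) * ‖f y‖))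
    (F' := fun v y => deriv h ⟪v, y⟫ • (innerSL ℝ y).smulRight (f y))
    (ball_mem_nhds u one_pos)
    (.of_forall fun v => aestronglyMeasurable_comp_inner_smul hh.contDiff.continuous hf v)
    (integrable_comp_inner_smul hh hf (hint k le_rfl) u)
    (aestronglyMeasurable_comp_inner_smul hh.deriv.contDiff.continuous
      (aestronglyMeasurable_innerSL_smulRight hf) u)
    (.of_forall fun y v hv => ?_) ((hint _ (by omega)).const_mul _)
    (.of_forall fun y v _ => ?_)
  · have hvu : ‖v‖ ≤ ‖u‖ + 1 := by
      linarith [norm_le_norm_add_norm_sub u v, (mem_ball_iff_norm.1 hv).le, norm_sub_rev v u]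
    refine (norm_comp_inner_smul_le hh.deriv v y ((innerSL ℝ y).smulRight (f y))).trans ?_
    rw [norm_innerSL_smulRight, pow_succ ‖y‖, mul_assoc (‖y‖ ^ (k - 1))]
    gcongr
  · have hinner : HasFDerivAt (fun v : E => ⟪v, y⟫) (innerSL ℝ y) v := by
      simpa [real_inner_comm] using (innerSL ℝ y).hasFDerivAt (x := v)
    refine (((hh.hasDerivAt ⟪v, y⟫).comp_hasFDerivAt v hinner).smul_const (f y)).congr_fderiv ?_
    ext w
    simp [mul_smul]

theorem contDiff_and_norm_iteratedFDeriv_integral_comp_inner_smul_le (n : ℕ)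
    (hh : HasDerivPowBound h k) (hf : AEStronglyMeasurable f μ)
    (hint : ∀ j, k ≤ j → Integrable (fun y => ‖y‖ ^ j * ‖f y‖) μ) :
    ContDiff ℝ n (fun u => ∫ y, h ⟪u, y⟫ • f y ∂μ) ∧
      ∃ C, ∀ u, ‖iteratedFDeriv ℝ n (fun u => ∫ y, h ⟪u, y⟫ • f y ∂μ) u‖ ≤ C * (1 + ‖u‖) ^ k := by
  induction n generalizing F h k with
  | zero =>
    refine ⟨?_, ∫ y, ‖y‖ ^ k * ‖f y‖ ∂μ, fun u => ?_⟩
    · rw [Nat.cast_zero, contDiff_zero]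
      exact continuous_iff_continuousAt.2 fun u =>
        (hasFDerivAt_integral_comp_inner_smul hh hf hint u).continuousAt
    · rw [norm_iteratedFDeriv_zero]
      refine (norm_integral_comp_inner_smul_le hh (hint k le_rfl) u).trans ?_
      have : 0 ≤ ∫ y, ‖y‖ ^ k * ‖f y‖ ∂μ := by positivity
      gcongr
      linarith
  | succ n ih =>
    have hderiv := hasFDerivAt_integral_comp_inner_smul hh hf hint
    obtain ⟨hC, C, hbound⟩ := ih hh.deriv (aestronglyMeasurable_innerSL_smulRight hf)
      fun j hj => by
        simpa only [norm_innerSL_smulRight, pow_succ, mul_assoc] using hint (j + 1) (by omega)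
    rw [← funext fun u => (hderiv u).fderiv] at hC hbound
    refine ⟨?_, |C|, fun u => ?_⟩
    · rw [Nat.cast_add, Nat.cast_one, contDiff_succ_iff_fderiv]
      exact ⟨fun u => (hderiv u).differentiableAt, by simp, hC⟩
    · rw [← norm_iteratedFDeriv_fderiv]
      refine (hbound u).trans ?_
      gcongr
      · exact le_abs_self C
      · simp
      · exact k.sub_le 1

theorem hasTemperateGrowth_integral_comp_inner_smul
    (hh : HasDerivPowBound h k) (hf : AEStronglyMeasurable f μ)
    (hint : ∀ j, k ≤ j → Integrable (fun y => ‖y‖ ^ j * ‖f y‖) μ) :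
    HasTemperateGrowth (fun u => ∫ y, h ⟪u, y⟫ • f y ∂μ) := by
  have key n := contDiff_and_norm_iteratedFDeriv_integral_comp_inner_smul_le n hh hf hint
  exact ⟨contDiff_infty.2 fun n => (key n).1, fun n => ⟨k, (key n).2⟩⟩

end OscillatoryIntegrals

section CharacteristicExponent

variable {d : ℕ} {α : ℝ}

theorem integrableOn_closedBall_norm_pow_mul_inv_rpow {j : ℕ} (hd : 0 < d) (hα : α < j) (R : ℝ) :
    IntegrableOn (fun y : EuclideanSpace ℝ (Fin d) => ‖y‖ ^ j * ‖(‖y‖ ^ ((d : ℝ) + α))⁻¹‖)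
      (closedBall 0 R) := by
  refine IntegrableOn.mono_set (t := ball 0 (R + 1)) ?_ (closedBall_subset_ball (lt_add_one R))
  have : Nonempty (Fin d) := ⟨⟨0, hd⟩⟩
  refine integrableOn_ball_of_norm_le_rpow (C := 1) (α := d + α - j)
    (by rwa [finrank_euclideanSpace_fin]) (by rw [finrank_euclideanSpace_fin]; linarith) ?_
    (by fun_prop)
  filter_upwards [ae_restrict_of_ae (Measure.ae_ne volume 0)] with y hy
  have : 0 < ‖y‖ := norm_pos_iff.2 hy
  rw [norm_mul, norm_norm, norm_pow, norm_norm, one_mul, Real.norm_of_nonneg (by positivity),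
    ← Real.rpow_neg this.le, ← Real.rpow_natCast, ← Real.rpow_add this]
  exact (congrArg _ (by ring)).le

theorem one_sub_cos_inner_div_nonneg (u y : EuclideanSpace ℝ (Fin d)) :
    0 ≤ (1 - Real.cos ⟪u, y⟫) / ‖y‖ ^ ((d : ℝ) + α) :=
  div_nonneg (by linarith [Real.cos_le_one ⟪u, y⟫]) (by positivity)

theorem integrableOn_one_sub_cos_inner_div (hd : 0 < d) (hα : α < 2) (R : ℝ)
    (u : EuclideanSpace ℝ (Fin d)) :
    IntegrableOn (fun y => (1 - Real.cos ⟪u, y⟫) / ‖y‖ ^ ((d : ℝ) + α)) (closedBall 0 R) :=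
  integrable_comp_inner_smul hasDerivPowBound_one_sub_cos
    (Measurable.aestronglyMeasurable (by fun_prop))
    (integrableOn_closedBall_norm_pow_mul_inv_rpow hd (mod_cast hα) R) u

theorem hasTemperateGrowth_Psi (hd : 0 < d) (hα : α < 2) : HasTemperateGrowth (Psi d α) :=
  hasTemperateGrowth_integral_comp_inner_smul hasDerivPowBound_one_sub_cos
    (Measurable.aestronglyMeasurable (by fun_prop)) fun _ hj =>
      integrableOn_closedBall_norm_pow_mul_inv_rpow hd (hα.trans_le (mod_cast hj)) 1

theorem Psi_smul {r : ℝ} (hr : 0 < r) (u : EuclideanSpace ℝ (Fin d)) :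
    Psi d α (r • u) =
      r ^ α * ∫ y in closedBall 0 r, (1 - Real.cos ⟪u, y⟫) / ‖y‖ ^ ((d : ℝ) + α) := by
  have hscale := Measure.setIntegral_comp_smul_of_pos (volume : Measure (EuclideanSpace ℝ (Fin d)))
    (fun y => (1 - Real.cos ⟪u, y⟫) / ‖y‖ ^ ((d : ℝ) + α)) (closedBall 0 1) hr
  rw [smul_unitClosedBall, Real.norm_of_nonneg hr.le, finrank_euclideanSpace, Fintype.card_fin,
    smul_eq_mul] at hscale
  rw [← mul_inv_cancel_left₀ (pow_ne_zero d hr.ne')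
    (∫ y in closedBall 0 r, (1 - Real.cos ⟪u, y⟫) / ‖y‖ ^ ((d : ℝ) + α)), ← hscale, Psi,
    ← mul_assoc, ← integral_const_mul]
  congr with y
  rw [norm_smul, Real.norm_of_nonneg hr.le, Real.mul_rpow hr.le (norm_nonneg _),
    Real.rpow_add hr, Real.rpow_natCast, real_inner_smul_left, real_inner_smul_right]
  have : r ^ α ≠ 0 := by positivity
  field_simp

theorem Psi_nonneg (u : EuclideanSpace ℝ (Fin d)) : 0 ≤ Psi d α u :=
  integral_nonneg (one_sub_cos_inner_div_nonneg u)

theorem cos_ne_one_of_abs_lt_one {s : ℝ} (hs : |s| < 1) (hs0 : s ≠ 0) : Real.cos s ≠ 1 := by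
  rw [abs_lt] at hs
  rwa [Ne, Real.cos_eq_one_iff_of_lt_of_lt (by linarith [Real.pi_gt_three])
    (by linarith [Real.pi_gt_three])]

theorem Psi_pos_of_norm_eq_one (hd : 0 < d) (hα : α < 2) {u : EuclideanSpace ℝ (Fin d)}
    (hu : ‖u‖ = 1) : 0 < Psi d α u := by
  rw [Psi, setIntegral_pos_iff_support_of_nonneg_ae
    (.of_forall (one_sub_cos_inner_div_nonneg u)) (integrableOn_one_sub_cos_inner_div hd hα 1 u)]
  have hopen : IsOpen (ball (0 : EuclideanSpace ℝ (Fin d)) 1 ∩ {y | ⟪u, y⟫ ≠ 0}) :=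
    isOpen_ball.inter (isOpen_ne_fun (by fun_prop) (by fun_prop))
  refine (hopen.measure_pos volume ⟨(1 / 2 : ℝ) • u, ?_, ?_⟩).trans_le (measure_mono ?_)
  · norm_num [norm_smul, hu]
  · simp [inner_smul_right, hu]
  · rintro y ⟨hy, hy0 : ⟪u, y⟫ ≠ 0⟩
    refine ⟨?_, ball_subset_closedBall hy⟩
    have hinner : |⟪u, y⟫| < 1 :=
      (abs_real_inner_le_norm u y).trans_lt (by simpa [hu] using hy)
    have : 0 < ‖y‖ := norm_pos_iff.2 fun h => hy0 (by simp [h])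
    exact div_ne_zero (sub_ne_zero.2 (cos_ne_one_of_abs_lt_one hinner hy0).symm) (by positivity)

theorem Psi_le_Psi_smul (hd : 0 < d) (hα : α < 2) {r : ℝ} (hr : 1 ≤ r)
    (u : EuclideanSpace ℝ (Fin d)) : r ^ α * Psi d α u ≤ Psi d α (r • u) := by
  rw [Psi_smul (by linarith)]
  gcongr
  exact setIntegral_mono_set (integrableOn_one_sub_cos_inner_div hd hα r u)
    (.of_forall (one_sub_cos_inner_div_nonneg u)) (closedBall_subset_closedBall hr).eventuallyLE

theorem exists_mul_rpow_sub_le_Psi (hd : 0 < d) (hα0 : 0 ≤ α) (hα : α < 2) :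
    ∃ c > 0, ∀ u, c * ‖u‖ ^ α - c ≤ Psi d α u := by
  have : Nonempty (Fin d) := ⟨⟨0, hd⟩⟩
  obtain ⟨e, he, hmin⟩ := (isCompact_sphere (0 : EuclideanSpace ℝ (Fin d)) 1).exists_isMinOn
    (NormedSpace.sphere_nonempty.2 zero_le_one)
    (hasTemperateGrowth_Psi hd hα).1.continuous.continuousOn
  have hpos : 0 < Psi d α e := Psi_pos_of_norm_eq_one hd hα (by simpa using he)
  refine ⟨Psi d α e, hpos, fun u => ?_⟩
  rcases le_total ‖u‖ 1 with hu | hu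
  · nlinarith [Real.rpow_le_one (norm_nonneg u) hu hα0, Psi_nonneg (α := α) u]
  · have hu0 : ‖u‖ ≠ 0 := by positivity
    calc Psi d α e * ‖u‖ ^ α - Psi d α e ≤ ‖u‖ ^ α * Psi d α (‖u‖⁻¹ • u) := by
          have : Psi d α e ≤ Psi d α (‖u‖⁻¹ • u) := hmin (by simp [norm_smul, hu0])
          nlinarith [Real.rpow_nonneg (norm_nonneg u) α]
      _ ≤ Psi d α u := by
          simpa [smul_smul, hu0] using Psi_le_Psi_smul hd hα hu (‖u‖⁻¹ • u)

end CharacteristicExponent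

section ExpNeg

theorem exists_one_add_pow_mul_exp_neg_mul_rpow_le (m : ℕ) {c β : ℝ} (hc : 0 < c) (hβ : 0 < β) :
    ∃ C, ∀ x, 0 ≤ x → (1 + x) ^ m * Real.exp (-(c * x ^ β)) ≤ C := by
  set N := ⌈m / β⌉₊
  have hN : (m : ℝ) ≤ β * N := by
    rw [mul_comm, ← div_le_iff₀ hβ]
    exact Nat.le_ceil _
  refine ⟨2 ^ m * max 1 (N.factorial / c ^ N), fun x hx => ?_⟩
  rcases le_total x 1 with hx1 | hx1
  · gcongr
    · linarith
    · exact (Real.exp_le_one_iff.2 (Left.neg_nonpos_iff.2 (by positivity))).trans (le_max_left _ _)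
  · have hpow : (1 + x) ^ m ≤ 2 ^ m * (x ^ β) ^ N :=
      calc (1 + x) ^ m ≤ (2 * x) ^ m := by gcongr; linarith
        _ = 2 ^ m * x ^ (m : ℝ) := by rw [mul_pow, Real.rpow_natCast]
        _ ≤ 2 ^ m * x ^ (β * N) := by gcongr
        _ = 2 ^ m * (x ^ β) ^ N := by rw [Real.rpow_mul hx, Real.rpow_natCast]
    have hexp := Real.pow_div_factorial_le_exp (c * x ^ β) (by positivity) N
    rw [div_le_iff₀ (by positivity), mul_pow] at hexp
    calc (1 + x) ^ m * Real.exp (-(c * x ^ β))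
        ≤ 2 ^ m * (x ^ β) ^ N * Real.exp (-(c * x ^ β)) := by gcongr
      _ ≤ 2 ^ m * (N.factorial / c ^ N) := by
        rw [mul_assoc, Real.exp_neg]
        gcongr
        rw [mul_inv_le_iff₀ (Real.exp_pos _), div_mul_eq_mul_div, le_div_iff₀ (by positivity)]
        linarith
      _ ≤ 2 ^ m * max 1 (N.factorial / c ^ N) := by gcongr; exact le_max_right _ _

variable {E : Type*} [NormedAddCommGroup E] {P : E → ℝ} {b c β : ℝ}

theorem exists_one_add_norm_pow_mul_exp_neg_le (hc : 0 < c) (hβ : 0 < β)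
    (hlow : ∀ u, c * ‖u‖ ^ β - b ≤ P u) (m : ℕ) :
    ∃ C, ∀ u, (1 + ‖u‖) ^ m * Real.exp (-P u) ≤ C := by
  obtain ⟨C, hC⟩ := exists_one_add_pow_mul_exp_neg_mul_rpow_le m hc hβ
  refine ⟨C * Real.exp b, fun u => ?_⟩
  calc (1 + ‖u‖) ^ m * Real.exp (-P u)
      ≤ (1 + ‖u‖) ^ m * Real.exp (-(c * ‖u‖ ^ β) + b) := by gcongr; linarith [hlow u]
    _ = (1 + ‖u‖) ^ m * Real.exp (-(c * ‖u‖ ^ β)) * Real.exp b := by rw [Real.exp_add, mul_assoc]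
    _ ≤ C * Real.exp b := by gcongr; exact hC _ (norm_nonneg u)

variable [NormedSpace ℝ E]

theorem exists_norm_iteratedFDeriv_exp_le (hP : HasTemperateGrowth P) (n : ℕ) :
    ∃ l : ℕ, ∃ C ≥ 0, ∀ u, ‖iteratedFDeriv ℝ n (fun u => Real.exp (P u)) u‖ ≤
      C * ((1 + ‖u‖) ^ l * Real.exp (P u)) := by
  obtain ⟨l, C, hC, hbound⟩ := hP.norm_iteratedFDeriv_le_uniform n
  refine ⟨l * n, n.factorial * (C + 1) ^ n, by positivity, fun u => ?_⟩
  have h1 : (1 : ℝ) ≤ (1 + ‖u‖) ^ l := one_le_pow₀ (by linarith [norm_nonneg u])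
  calc ‖iteratedFDeriv ℝ n (Real.exp ∘ P) u‖
      ≤ n.factorial * Real.exp (P u) * ((C + 1) * (1 + ‖u‖) ^ l) ^ n := by
        refine norm_iteratedFDeriv_comp_le Real.contDiff_exp hP.1 (mod_cast le_top) u
          (fun i _ => ?_) fun i hi hin => (hbound i hin u).trans ?_
        · rw [norm_iteratedFDeriv_eq_norm_iteratedDeriv, iteratedDeriv_eq_iterate,
            Real.iter_deriv_exp, Real.norm_of_nonneg (Real.exp_pos _).le]
        · calc C * (1 + ‖u‖) ^ l ≤ (C + 1) * (1 + ‖u‖) ^ l := by gcongr; linarith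
            _ ≤ ((C + 1) * (1 + ‖u‖) ^ l) ^ i := le_self_pow₀ (by nlinarith) (by omega)
    _ = n.factorial * (C + 1) ^ n * ((1 + ‖u‖) ^ (l * n) * Real.exp (P u)) := by
        rw [mul_pow, pow_mul]; ring

theorem exists_schwartzMap_eq_exp_neg (hP : HasTemperateGrowth P) (hc : 0 < c) (hβ : 0 < β)
    (hlow : ∀ u, c * ‖u‖ ^ β - b ≤ P u) : ∃ g : 𝓢(E, ℝ), ∀ u, g u = Real.exp (-P u) := by
  have hneg : HasTemperateGrowth (fun u => -P u) := hP.neg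
  refine ⟨⟨fun u => Real.exp (-P u), Real.contDiff_exp.comp hneg.1, fun k n => ?_⟩, fun u => rfl⟩
  obtain ⟨l, C, hC, hderiv⟩ := exists_norm_iteratedFDeriv_exp_le hneg n
  obtain ⟨A, hA⟩ := exists_one_add_norm_pow_mul_exp_neg_le hc hβ hlow (k + l)
  refine ⟨C * A, fun u => ?_⟩
  calc ‖u‖ ^ k * ‖iteratedFDeriv ℝ n (fun u => Real.exp (-P u)) u‖
      ≤ (1 + ‖u‖) ^ k * (C * ((1 + ‖u‖) ^ l * Real.exp (-P u))) := by
        gcongr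
        · linarith
        · exact hderiv u
    _ = C * ((1 + ‖u‖) ^ (k + l) * Real.exp (-P u)) := by ring
    _ ≤ C * A := by gcongr; exact hA u

end ExpNeg

section CosTransform

variable {E : Type*} [NormedAddCommGroup E] [InnerProductSpace ℝ E] [MeasurableSpace E]
  [BorelSpace E]

theorem integrable_exp_inner_mul_I (μ : Measure E) [IsFiniteMeasure μ] (u : E) :
    Integrable (fun y => Complex.exp (⟪y, u⟫ * Complex.I)) μ :=
  .of_bound (C := 1) (Continuous.aestronglyMeasurable (by fun_prop))
    (.of_forall fun _ => (Complex.norm_exp_ofReal_mul_I _).le)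

theorem re_charFun (μ : Measure E) [IsFiniteMeasure μ] (u : E) :
    (charFun μ u).re = ∫ y, Real.cos ⟪y, u⟫ ∂μ := by
  simp only [← Complex.exp_ofReal_mul_I_re]
  exact (integral_re (integrable_exp_inner_mul_I μ u)).symm

theorem charFun_eq_ofReal_integral_cos (μ : Measure E) [IsFiniteMeasure μ]
    [μ.IsNegInvariant] (u : E) :
    charFun μ u = (∫ y, Real.cos ⟪y, u⟫ ∂μ : ℝ) := by
  rw [← re_charFun, eq_comm, ← Complex.conj_eq_iff_re, ← charFun_neg, charFun_apply,
    charFun_apply, ← integral_neg_eq_self]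
  simp

theorem integral_cos_inner_sub {μ : Measure E} [IsFiniteMeasure μ] {u : E} {m : ℝ}
    (hm : charFun μ u = m) (x : E) :
    ∫ z, Real.cos ⟪x - z, u⟫ ∂μ = Real.cos ⟪x, u⟫ * m := by
  have hexp (z : E) : Real.cos ⟪x - z, u⟫ =
      (Complex.exp (⟪x, u⟫ * Complex.I) * Complex.exp (⟪z, -u⟫ * Complex.I)).re := by
    rw [← Complex.exp_add, ← add_mul, ← Complex.ofReal_add, Complex.exp_ofReal_mul_I_re,
      inner_sub_left, inner_neg_right, sub_eq_add_neg]
  simp only [hexp]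
  refine (integral_re ((integrable_exp_inner_mul_I μ (-u)).const_mul _)).trans ?_
  rw [integral_const_mul, ← charFun_apply, charFun_neg, hm]
  simp [Complex.exp_ofReal_mul_I_re]

variable [FiniteDimensional ℝ E]

/-- The cosine transform of `f`, that is, the Fourier transform of an even function written
without complex numbers. There is no factor `2π` in the phase and no normalising constant, as in
the definition of `pdens`. -/
noncomputable def cosTransform (f : E → ℝ) (x : E) : ℝ :=
  ∫ u, Real.cos ⟪x, u⟫ * f u

theorem re_fourier_ofReal {f : E → ℝ} (hf : Integrable f) (w : E) :
    (𝓕 (fun u => (f u : ℂ)) w).re = cosTransform f ((2 * Real.pi) • w) := by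
  have hint : Integrable (fun v : E => Real.fourierChar (-⟪v, w⟫) • (f v : ℂ)) :=
    (Real.fourierIntegral_convergent_iff w).2 hf.ofReal
  rw [Real.fourier_eq, cosTransform]
  refine (integral_re hint).symm.trans (integral_congr_ae (.of_forall fun v => ?_))
  change (Real.fourierChar (-⟪v, w⟫) • (f v : ℂ)).re = _
  rw [Circle.smul_def, Real.fourierChar_apply, smul_eq_mul, Complex.re_mul_ofReal,
    Complex.exp_ofReal_mul_I_re, mul_neg, Real.cos_neg, real_inner_comm,
    ← real_inner_smul_left]

theorem exists_schwartzMap_eq_cosTransform (f : 𝓢(E, ℝ)) :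
    ∃ g : 𝓢(E, ℝ), ∀ x, g x = cosTransform f x := by
  let dilation : E ≃L[ℝ] E :=
    ContinuousLinearEquiv.smulLeft (Units.mk0 ((2 * Real.pi)⁻¹ : ℝ) (by positivity))
  let fC : 𝓢(E, ℂ) := SchwartzMap.postcompCLM (𝕜 := ℝ) Complex.ofRealCLM f
  refine ⟨SchwartzMap.postcompCLM (𝕜 := ℝ) Complex.reCLM
    (SchwartzMap.compCLMOfContinuousLinearEquiv ℝ dilation (𝓕 fC)), fun x => ?_⟩
  refine (re_fourier_ofReal f.integrable ((2 * Real.pi)⁻¹ • x)).trans ?_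
  rw [smul_inv_smul₀ (by positivity)]

theorem cosTransform_comp_smul (f : E → ℝ) {r : ℝ} (hr : 0 < r) (x : E) :
    cosTransform (fun u => f (r • u)) x =
      (r ^ Module.finrank ℝ E)⁻¹ * cosTransform f (r⁻¹ • x) := by
  have hscale := Measure.integral_comp_smul volume (fun v => Real.cos ⟪r⁻¹ • x, v⟫ * f v) r
  rw [abs_of_nonneg (by positivity), smul_eq_mul] at hscale
  rw [cosTransform, cosTransform, ← hscale]
  simp_rw [real_inner_smul_left, real_inner_smul_right, inv_mul_cancel_left₀ hr.ne']

theorem cosTransform_mul {μ : Measure E} [IsFiniteMeasure μ] {m f : E → ℝ}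
    (hm : ∀ u, charFun μ u = m u) (hf : Integrable f) (x : E) :
    cosTransform (fun u => m u * f u) x = ∫ z, cosTransform f (x - z) ∂μ := by
  have hcos (u : E) : Real.cos ⟪x, u⟫ * (m u * f u) = ∫ z, Real.cos ⟪x - z, u⟫ * f u ∂μ := by
    rw [integral_mul_const, integral_cos_inner_sub (hm u), mul_assoc]
  have hprod : Integrable (uncurry fun u z : E => Real.cos ⟪x - z, u⟫ * f u) (volume.prod μ) := by
    refine (hf.comp_fst μ).bdd_mul (c := 1) (Continuous.aestronglyMeasurable (by fun_prop))
      (.of_forall fun p => Real.abs_cos_le_one _)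
  simp only [cosTransform, hcos]
  exact integral_integral_swap hprod

end CosTransform

section CompoundPoisson

/-- The `n`-fold convolution power of a measure. -/
noncomputable def convPow {M : Type*} [AddMonoid M] [MeasurableSpace M] (ν : Measure M) :
    ℕ → Measure M
  | 0 => Measure.dirac 0
  | n + 1 => (convPow ν n).conv ν

/-- The law of a compound Poisson variable whose jumps have intensity measure `ν`: the sum of `N`
independent jumps with law `ν / ν(M)`, where `N` is Poisson with mean `ν(M)`. The factor `ν(M) ^ n`
of the Poisson weight is absorbed in the unnormalised convolution power. -/
noncomputable def compoundPoisson {M : Type*} [AddMonoid M] [MeasurableSpace M] (ν : Measure M) :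
    Measure M :=
  Measure.sum fun n =>
    ENNReal.ofReal (Real.exp (-ν.real Set.univ) / n.factorial) • convPow ν n

section AddMonoid

variable {M : Type*} [AddMonoid M] [MeasurableSpace M] [MeasurableAdd₂ M] (ν : Measure M)
  [IsFiniteMeasure ν]

instance isFiniteMeasure_convPow (n : ℕ) : IsFiniteMeasure (convPow ν n) := by
  induction n with
  | zero => exact inferInstanceAs (IsFiniteMeasure (Measure.dirac 0))
  | succ n ih => exact inferInstanceAs (IsFiniteMeasure ((convPow ν n).conv ν))

theorem convPow_univ (n : ℕ) : convPow ν n Set.univ = ν Set.univ ^ n := by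
  induction n with
  | zero => simp [convPow]
  | succ n ih =>
    rw [convPow, pow_succ, ← ih, ← lintegral_one, Measure.lintegral_conv measurable_const]
    simp [mul_comm]

instance isProbabilityMeasure_compoundPoisson : IsProbabilityMeasure (compoundPoisson ν) := by
  have hreal : 0 ≤ ν.real Set.univ := measureReal_nonneg
  have hsum : HasSum
      (fun n : ℕ => Real.exp (-ν.real Set.univ) * ν.real Set.univ ^ n / n.factorial) 1 :=
    ProbabilityTheory.hasSum_one_poissonMeasure ⟨ν.real Set.univ, hreal⟩
  have hterm (n : ℕ) : ENNReal.ofReal (Real.exp (-ν.real Set.univ) / n.factorial) *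
      ν Set.univ ^ n =
      ENNReal.ofReal (Real.exp (-ν.real Set.univ) * ν.real Set.univ ^ n / n.factorial) := by
    rw [mul_div_right_comm, ENNReal.ofReal_mul (by positivity), ENNReal.ofReal_pow hreal,
      ofReal_measureReal]
  constructor
  simp only [compoundPoisson, Measure.sum_apply _ MeasurableSet.univ, Measure.smul_apply,
    convPow_univ, smul_eq_mul, hterm]
  rw [← ENNReal.ofReal_tsum_of_nonneg (fun n => by positivity) hsum.summable, hsum.tsum_eq,
    ENNReal.ofReal_one]

end AddMonoid

variable {E : Type*} [NormedAddCommGroup E] [InnerProductSpace ℝ E] [MeasurableSpace E]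
  [BorelSpace E] [SecondCountableTopology E] (ν : Measure E) [IsFiniteMeasure ν]

theorem charFun_convPow (n : ℕ) (u : E) : charFun (convPow ν n) u = charFun ν u ^ n := by
  induction n with
  | zero => simp [convPow]
  | succ n ih => rw [convPow, charFun_conv, ih, pow_succ]

theorem charFun_compoundPoisson (u : E) :
    charFun (compoundPoisson ν) u = Complex.exp (charFun ν u - ν.real Set.univ) := by
  rw [charFun_apply, compoundPoisson, integral_sum_measure
    (integrable_exp_inner_mul_I (compoundPoisson ν) u), sub_eq_neg_add, Complex.exp_add]
  have hterm (n : ℕ) : ∫ x, Complex.exp (⟪x, u⟫ * Complex.I)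
      ∂(ENNReal.ofReal (Real.exp (-ν.real Set.univ) / n.factorial) • convPow ν n) =
      Complex.exp (-ν.real Set.univ) * (charFun ν u ^ n / n.factorial) := by
    rw [integral_smul_measure, ← charFun_apply, charFun_convPow,
      ENNReal.toReal_ofReal (by positivity), Complex.real_smul]
    push_cast
    ring
  simp_rw [hterm, tsum_mul_left, Complex.exp_eq_exp_ℂ, NormedSpace.exp_eq_tsum_div]

theorem charFun_compoundPoisson_of_isNegInvariant [ν.IsNegInvariant] (u : E) :
    charFun (compoundPoisson ν) u = Real.exp (-∫ y, (1 - Real.cos ⟪u, y⟫) ∂ν) := by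
  have hcos : Integrable (fun y => Real.cos ⟪u, y⟫) ν :=
    .of_bound (C := 1) (Continuous.aestronglyMeasurable (by fun_prop))
      (.of_forall fun _ => Real.abs_cos_le_one _)
  rw [charFun_compoundPoisson, charFun_eq_ofReal_integral_cos,
    integral_sub (integrable_const 1) hcos]
  simp [real_inner_comm]

end CompoundPoisson

section LargeJumps

variable {d : ℕ} {α t r : ℝ}

/-- The Lévy measure `t |y|^{-(d+α)} dy` on the annulus `r < |y| ≤ 1`: the intensity of the jumps of
size larger than `r` made up to time `t`. -/
noncomputable def largeJumpMeasure (d : ℕ) (α t r : ℝ) : Measure (EuclideanSpace ℝ (Fin d)) :=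
  (volume.restrict (closedBall 0 1 \ closedBall 0 r)).withDensity
    fun y => ENNReal.ofReal (t / ‖y‖ ^ ((d : ℝ) + α))

theorem isNegInvariant_withDensity {G : Type*} [AddGroup G] [MeasurableSpace G] [MeasurableNeg G]
    {μ : Measure G} [μ.IsNegInvariant] {f : G → ENNReal} (hf : Measurable f)
    (heven : ∀ x, f (-x) = f x) : (μ.withDensity f).IsNegInvariant := by
  refine ⟨Measure.ext fun s hs => ?_⟩
  rw [Measure.neg, Measure.map_apply measurable_neg hs, withDensity_apply _ (measurable_neg hs),
    withDensity_apply _ hs, ← (Measure.measurePreserving_neg μ).setLIntegral_comp_preimage hs hf]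
  simp only [heven]

instance : (largeJumpMeasure d α t r).IsNegInvariant := by
  rw [largeJumpMeasure,
    ← withDensity_indicator (measurableSet_closedBall.diff measurableSet_closedBall)]
  refine isNegInvariant_withDensity (Measurable.indicator (by fun_prop)
    (measurableSet_closedBall.diff measurableSet_closedBall)) fun y => ?_
  simp [Set.indicator]

theorem isFiniteMeasure_largeJumpMeasure (ht : 0 ≤ t) (hr : 0 < r) (hα : 0 ≤ α) :
    IsFiniteMeasure (largeJumpMeasure d α t r) := by
  refine isFiniteMeasure_withDensity_ofReal ?_
  refine (Measure.integrableOn_of_bounded (M := t / r ^ ((d : ℝ) + α))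
    ((measure_mono Set.sdiff_subset).trans_lt measure_closedBall_lt_top).ne
    (Measurable.aestronglyMeasurable (by fun_prop)) ?_).2
  filter_upwards [ae_restrict_mem (measurableSet_closedBall.diff measurableSet_closedBall)]
    with y hy
  have hry : r < ‖y‖ := by simpa using hy.2
  rw [Real.norm_of_nonneg (by positivity)]
  gcongr

theorem integral_one_sub_cos_largeJumpMeasure (hd : 0 < d) (hα : α < 2) (ht : 0 ≤ t)
    (hr : 0 < r) (hr1 : r ≤ 1) (u : EuclideanSpace ℝ (Fin d)) :
    ∫ y, (1 - Real.cos ⟪u, y⟫) ∂largeJumpMeasure d α t r =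
      t * Psi d α u - t * r ^ (-α) * Psi d α (r • u) := by
  have hdensity : ∫ y, (1 - Real.cos ⟪u, y⟫) ∂largeJumpMeasure d α t r =
      ∫ y in closedBall 0 1 \ closedBall 0 r,
        t * ((1 - Real.cos ⟪u, y⟫) / ‖y‖ ^ ((d : ℝ) + α)) := by
    rw [largeJumpMeasure, integral_withDensity_eq_integral_toReal_smul (by fun_prop)
      (.of_forall fun _ => ENNReal.ofReal_lt_top)]
    congr with y
    rw [ENNReal.toReal_ofReal (by positivity), smul_eq_mul, div_mul_eq_mul_div, mul_div_assoc]
  rw [hdensity, integral_const_mul, setIntegral_sdiff measurableSet_closedBall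
    (integrableOn_one_sub_cos_inner_div hd hα 1 u) (closedBall_subset_closedBall hr1), Psi_smul hr,
    mul_assoc t, ← mul_assoc (r ^ (-α)), ← Real.rpow_add hr, neg_add_cancel, Real.rpow_zero,
    one_mul, mul_sub, Psi]

end LargeJumps

section TransitionDensity

variable {d : ℕ} {α t T r : ℝ}

theorem pdens_eq_cosTransform (x : EuclideanSpace ℝ (Fin d)) :
    pdens d α t x =
      ((2 * Real.pi) ^ d)⁻¹ * cosTransform (fun u => Real.exp (-(t * Psi d α u))) x := by
  simp only [pdens, cosTransform, neg_mul]

theorem exists_schwartzMap_eq_exp_neg_mul_Psi (hd : 0 < d) (hα0 : 0 < α) (hα : α < 2)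
    (ht : 0 < t) :
    ∃ g : 𝓢(EuclideanSpace ℝ (Fin d), ℝ), ∀ u, g u = Real.exp (-(t * Psi d α u)) := by
  obtain ⟨c, hc, hlow⟩ := exists_mul_rpow_sub_le_Psi (d := d) hd hα0.le hα
  refine exists_schwartzMap_eq_exp_neg (c := t * c) (β := α) (b := t * c)
    ((HasTemperateGrowth.const t).mul (hasTemperateGrowth_Psi hd hα)) (by positivity) hα0
    fun u => ?_
  rw [mul_assoc, ← mul_sub]
  gcongr
  exact hlow u

theorem exists_schwartzMap_eq_pdens (hd : 0 < d) (hα0 : 0 < α) (hα : α < 2) (ht : 0 < t) :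
    ∃ p : 𝓢(EuclideanSpace ℝ (Fin d), ℝ), ⇑p = pdens d α t := by
  obtain ⟨g, hg⟩ := exists_schwartzMap_eq_exp_neg_mul_Psi hd hα0 hα ht
  obtain ⟨p, hp⟩ := exists_schwartzMap_eq_cosTransform g
  refine ⟨((2 * Real.pi) ^ d)⁻¹ • p, funext fun x => ?_⟩
  rw [pdens_eq_cosTransform, ← funext hg, ← hp, smul_apply, smul_eq_mul]

theorem charFun_compoundPoisson_largeJumpMeasure (hd : 0 < d) (hα0 : 0 < α) (hα : α < 2)
    (hT : 0 ≤ T) (hr : 0 < r) (hr1 : r ≤ 1) (u : EuclideanSpace ℝ (Fin d)) :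
    charFun (compoundPoisson (largeJumpMeasure d α (r ^ α * T) r)) u =
      Real.exp (-(r ^ α * T * Psi d α u - T * Psi d α (r • u))) := by
  have := isFiniteMeasure_largeJumpMeasure (d := d) (t := r ^ α * T) (by positivity) hr hα0.le
  have hscale : r ^ α * T * r ^ (-α) = T := by
    rw [mul_right_comm, ← Real.rpow_add hr, add_neg_cancel, Real.rpow_zero, one_mul]
  rw [charFun_compoundPoisson_of_isNegInvariant,
    integral_one_sub_cos_largeJumpMeasure hd hα (by positivity) hr hr1, hscale]

theorem pdens_rpow_mul_eq_integral (hd : 0 < d) (hα0 : 0 < α) (hα : α < 2) (hT : 0 < T)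
    (hr : 0 < r) (hr1 : r ≤ 1) (y : EuclideanSpace ℝ (Fin d)) :
    pdens d α (r ^ α * T) y = ∫ z, (r ^ d)⁻¹ * pdens d α T (r⁻¹ • (y - z))
      ∂compoundPoisson (largeJumpMeasure d α (r ^ α * T) r) := by
  have := isFiniteMeasure_largeJumpMeasure (d := d) (t := r ^ α * T) (by positivity) hr hα0.le
  obtain ⟨g, hg⟩ := exists_schwartzMap_eq_exp_neg_mul_Psi (d := d) hd hα0 hα hT
  have hfactor (u : EuclideanSpace ℝ (Fin d)) : Real.exp (-(r ^ α * T * Psi d α u)) =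
      Real.exp (-(r ^ α * T * Psi d α u - T * Psi d α (r • u))) * g (r • u) := by
    rw [hg, ← Real.exp_add]
    congr 1
    ring
  rw [pdens_eq_cosTransform, funext hfactor, cosTransform_mul
    (charFun_compoundPoisson_largeJumpMeasure hd hα0 hα hT.le hr hr1)
    (g.integrable.comp_smul hr.ne'), ← integral_const_mul]
  simp only [cosTransform_comp_smul _ hr, pdens_eq_cosTransform, ← hg, finrank_euclideanSpace_fin,
    mul_left_comm]

end TransitionDensity

section GradientBound

section Smoothing

variable {E F : Type*} [NormedAddCommGroup E] [NormedAddCommGroup F] [NormedSpace ℝ F]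
  [MeasurableSpace E] [BorelSpace E] [SecondCountableTopology E] {q : E → F} {μ : Measure E}

theorem integral_norm_integral_comp_sub_le [IsProbabilityMeasure μ] {ν : Measure E} [SFinite ν]
    [ν.IsAddRightInvariant] (hqc : Continuous q) (hq : Integrable q ν) :
    ∫ y, ‖∫ z, q (y - z) ∂μ‖ ∂ν ≤ ∫ y, ‖q y‖ ∂ν := by
  have hsub : Continuous (uncurry fun y z => q (y - z)) := hqc.comp continuous_sub
  rw [integral_norm_eq_lintegral_enorm
      hsub.stronglyMeasurable.integral_prod_right.aestronglyMeasurable,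
    integral_norm_eq_lintegral_enorm hq.aestronglyMeasurable]
  refine ENNReal.toReal_mono hq.hasFiniteIntegral.ne ?_
  calc ∫⁻ y, ‖∫ z, q (y - z) ∂μ‖ₑ ∂ν ≤ ∫⁻ y, ∫⁻ z, ‖q (y - z)‖ₑ ∂μ ∂ν :=
        lintegral_mono fun _ => enorm_integral_le_lintegral_enorm _
    _ = ∫⁻ z, ∫⁻ y, ‖q (y - z)‖ₑ ∂ν ∂μ :=
        lintegral_lintegral_swap hsub.enorm.measurable.aemeasurable
    _ = ∫⁻ _, ∫⁻ y, ‖q y‖ₑ ∂ν ∂μ :=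
        lintegral_congr fun z => lintegral_sub_right_eq_self (fun y => ‖q y‖ₑ) z
    _ = ∫⁻ y, ‖q y‖ₑ ∂ν := by simp

theorem hasFDerivAt_integral_comp_sub [NormedSpace ℝ E] [IsFiniteMeasure μ] {B C : ℝ}
    (hq : ContDiff ℝ 1 q) (hB : ∀ x, ‖q x‖ ≤ B) (hC : ∀ x, ‖fderiv ℝ q x‖ ≤ C) (y : E) :
    HasFDerivAt (fun y => ∫ z, q (y - z) ∂μ) (∫ z, fderiv ℝ q (y - z) ∂μ) y := by
  have hqc := hq.continuous
  have hq' := hq.continuous_fderiv one_ne_zero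
  refine hasFDerivAt_integral_of_dominated_of_fderiv_le
    (F' := fun y z => fderiv ℝ q (y - z)) (bound := fun _ => C) univ_mem
    (.of_forall fun y => Continuous.aestronglyMeasurable (by fun_prop))
    (.of_bound (C := B) (Continuous.aestronglyMeasurable (by fun_prop))
      (.of_forall fun z => hB (y - z)))
    (Continuous.aestronglyMeasurable (by fun_prop)) (.of_forall fun z y _ => hC (y - z))
    (integrable_const C) (.of_forall fun z y _ => ?_)
  exact (hasFDerivAt_comp_sub z).2 (hq.differentiable one_ne_zero (y - z)).hasFDerivAt

end Smoothing

theorem exists_schwartzMap_eq_smul_comp_smul {E F : Type*} [NormedAddCommGroup E] [NormedSpace ℝ E]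
    [NormedAddCommGroup F] [NormedSpace ℝ F] (q : 𝓢(E, F)) (c : ℝ) {r : ℝ} (hr : r ≠ 0) :
    ∃ p : 𝓢(E, F), ⇑p = fun y => c • q (r • y) :=
  ⟨c • SchwartzMap.compCLMOfContinuousLinearEquiv ℝ
    (ContinuousLinearEquiv.smulLeft (Units.mk0 r hr)) q, rfl⟩

variable {E : Type*} [NormedAddCommGroup E] [NormedSpace ℝ E] [FiniteDimensional ℝ E]
  [MeasurableSpace E] [BorelSpace E]

theorem integrable_fderiv_schwartzMap {F : Type*} [NormedAddCommGroup F] [NormedSpace ℝ F]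
    {ν : Measure E} [ν.HasTemperateGrowth] (q : 𝓢(E, F)) :
    Integrable (fderiv ℝ q) ν :=
  (SchwartzMap.fderivCLM ℝ E F q).integrable

theorem integral_norm_fderiv_integral_comp_sub_le {F : Type*} [NormedAddCommGroup F]
    [NormedSpace ℝ F] {μ ν : Measure E} [IsProbabilityMeasure μ] [ν.IsAddHaarMeasure]
    (q : 𝓢(E, F)) :
    ∫ y, ‖fderiv ℝ (fun y => ∫ z, q (y - z) ∂μ) y‖ ∂ν ≤ ∫ y, ‖fderiv ℝ q y‖ ∂ν := by
  have hfderiv (y : E) :=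
    (hasFDerivAt_integral_comp_sub (μ := μ) (q.smooth 1) (q.norm_le_seminorm ℝ)
      ((SchwartzMap.fderivCLM ℝ E F q).norm_le_seminorm ℝ) y).fderiv
  simp only [hfderiv]
  exact integral_norm_integral_comp_sub_le ((q.smooth 1).continuous_fderiv one_ne_zero)
    (integrable_fderiv_schwartzMap q)

theorem integral_norm_fderiv_dilation {F : Type*} [NormedAddCommGroup F] [NormedSpace ℝ F]
    {ν : Measure E} [ν.IsAddHaarMeasure] (q : E → F) {r : ℝ} (hr : 0 < r) :
    ∫ y, ‖fderiv ℝ (fun y => (r ^ Module.finrank ℝ E)⁻¹ • q (r⁻¹ • y)) y‖ ∂ν =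
      r⁻¹ * ∫ y, ‖fderiv ℝ q y‖ ∂ν := by
  have hnorm (y : E) :
      ‖fderiv ℝ (fun y => (r ^ Module.finrank ℝ E)⁻¹ • q (r⁻¹ • y)) y‖ =
        (r ^ Module.finrank ℝ E)⁻¹ * r⁻¹ * ‖fderiv ℝ q (r⁻¹ • y)‖ := by
    rw [← Pi.smul_def, fderiv_const_smul_field, Pi.smul_apply, fderiv_comp_smul, norm_smul,
      norm_smul, ← mul_assoc, Real.norm_of_nonneg (by positivity),
      Real.norm_of_nonneg (by positivity)]
  simp only [hnorm]
  rw [integral_const_mul, Measure.integral_comp_inv_smul ν (fun y => ‖fderiv ℝ q y‖) r,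
    abs_of_nonneg (by positivity), smul_eq_mul]
  field_simp

theorem integral_norm_fderiv_pdens_rpow_mul_le {d : ℕ} {α T r : ℝ} (hd : 0 < d) (hα0 : 0 < α)
    (hα : α < 2) (hT : 0 < T) (hr : 0 < r) (hr1 : r ≤ 1) :
    ∫ y, ‖fderiv ℝ (pdens d α (r ^ α * T)) y‖ ≤ r⁻¹ * ∫ y, ‖fderiv ℝ (pdens d α T) y‖ := by
  have := isFiniteMeasure_largeJumpMeasure (d := d) (t := r ^ α * T) (by positivity) hr hα0.le
  obtain ⟨q, hq⟩ := exists_schwartzMap_eq_pdens hd hα0 hα hT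
  obtain ⟨qr, hqr⟩ := exists_schwartzMap_eq_smul_comp_smul q
    (r ^ Module.finrank ℝ (EuclideanSpace ℝ (Fin d)))⁻¹ (inv_ne_zero hr.ne')
  have hsmooth := integral_norm_fderiv_integral_comp_sub_le (ν := volume)
    (μ := compoundPoisson (largeJumpMeasure d α (r ^ α * T) r)) qr
  rw [hqr, integral_norm_fderiv_dilation q hr] at hsmooth
  simpa only [funext (pdens_rpow_mul_eq_integral hd hα0 hα hT hr hr1), ← hq,
    finrank_euclideanSpace_fin, smul_eq_mul] using hsmooth

end GradientBound

section Correlation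

variable {E F : Type*} [NormedAddCommGroup E] [NormedSpace ℝ E] [NormedAddCommGroup F]
  [NormedSpace ℝ F] {φ ψ : E → F} {K : ℝ}

theorem norm_fderiv_smulRight_le (p : 𝓢(E, ℝ)) (hK : ∀ x, ‖ψ x‖ ≤ K) (x y : E) :
    ‖(-fderiv ℝ p y).smulRight (ψ (x + y))‖ ≤ K * ‖fderiv ℝ p y‖ := by
  rw [ContinuousLinearMap.norm_smulRight_apply, norm_neg, mul_comm]
  gcongr
  exact hK (x + y)

variable [FiniteDimensional ℝ E] [MeasurableSpace E] [BorelSpace E] {ν : Measure E}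

theorem integrable_smul_of_norm_fderiv_le [ν.HasTemperateGrowth] (p : 𝓢(E, ℝ))
    (hφ : ContDiff ℝ 1 φ) (hK : ∀ x, ‖fderiv ℝ φ x‖ ≤ K) :
    Integrable (fun y => p y • φ y) ν := by
  have hφc := hφ.continuous
  have hpc := p.continuous
  refine ((p.integrable (μ := ν)).norm.mul_const ‖φ 0‖ |>.add
    ((p.integrable_pow_mul ν 1).const_mul K)).mono'
    (Continuous.aestronglyMeasurable (by fun_prop)) (.of_forall fun y => ?_)
  have hgrowth : ‖φ y‖ ≤ ‖φ 0‖ + K * ‖y‖ := by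
    have hmvt := convex_univ.norm_image_sub_le_of_norm_fderiv_le
      (fun x _ => hφ.differentiable one_ne_zero x) (fun x _ => hK x) (Set.mem_univ 0)
      (Set.mem_univ y)
    rw [sub_zero] at hmvt
    linarith [norm_le_norm_add_norm_sub (φ 0) (φ y), norm_sub_rev (φ 0) (φ y)]
  calc ‖p y • φ y‖ ≤ ‖p y‖ * (‖φ 0‖ + K * ‖y‖) := by rw [norm_smul]; gcongr
    _ = ‖p y‖ * ‖φ 0‖ + K * (‖y‖ ^ 1 * ‖p y‖) := by ring

theorem hasFDerivAt_integral_smul_comp_add [ν.HasTemperateGrowth] (p : 𝓢(E, ℝ))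
    (hφ : ContDiff ℝ 1 φ) (hK : ∀ x, ‖fderiv ℝ φ x‖ ≤ K) (x : E) :
    HasFDerivAt (fun x => ∫ y, p y • φ (x + y) ∂ν) (∫ y, p y • fderiv ℝ φ (x + y) ∂ν) x := by
  have hφc := hφ.continuous
  have hφ' := hφ.continuous_fderiv one_ne_zero
  have hpc := p.continuous
  refine hasFDerivAt_integral_of_dominated_of_fderiv_le
    (F' := fun x y => p y • fderiv ℝ φ (x + y)) (bound := fun y => ‖p y‖ * K) univ_mem
    (.of_forall fun x => Continuous.aestronglyMeasurable (by fun_prop))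
    (integrable_smul_of_norm_fderiv_le p (φ := fun y => φ (x + y)) (by fun_prop)
      fun y => (congrArg norm (fderiv_comp_add_left x)).trans_le (hK (x + y)))
    (Continuous.aestronglyMeasurable (by fun_prop))
    (.of_forall fun y x _ => ?_) (p.integrable.norm.mul_const K) (.of_forall fun y x _ => ?_)
  · rw [norm_smul]
    gcongr
    exact hK (x + y)
  · exact ((hasFDerivAt_comp_add_right y).2
      (hφ.differentiable one_ne_zero (x + y)).hasFDerivAt).const_smul (p y)

theorem exists_integrable_norm_comp_sub_le [ν.IsAddHaarMeasure] (p : 𝓢(E, F)) (x : E) :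
    ∃ g : E → ℝ, Integrable g ν ∧ ∀ x' ∈ ball x 1, ∀ y, ‖p (y - x')‖ ≤ g y := by
  set n := Module.finrank ℝ E + 1
  obtain ⟨C, hC⟩ : ∃ C, ∀ y, (1 + ‖y‖) ^ n * ‖p y‖ ≤ C :=
    ⟨_, fun y => by
      simpa using SchwartzMap.one_add_le_sup_seminorm_apply (𝕜 := ℝ) (m := (n, 0)) le_rfl le_rfl
        p y⟩
  refine ⟨fun y => 2 ^ n * C * (1 + ‖y - x‖) ^ (-(n : ℝ)),
    ((integrable_one_add_norm (by simp [n])).comp_sub_right x).const_mul _, fun x' hx' y => ?_⟩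
  have hxx' : ‖x' - x‖ < 1 := mem_ball_iff_norm.1 hx'
  have hshift : 1 + ‖y - x‖ ≤ 2 * (1 + ‖y - x'‖) := by
    linarith [norm_sub_le_norm_sub_add_norm_sub y x' x, norm_nonneg (y - x')]
  beta_reduce
  rw [Real.rpow_neg (by positivity), Real.rpow_natCast, ← div_eq_mul_inv,
    le_div_iff₀ (by positivity)]
  calc ‖p (y - x')‖ * (1 + ‖y - x‖) ^ n ≤ ‖p (y - x')‖ * (2 * (1 + ‖y - x'‖)) ^ n := by gcongr
    _ = 2 ^ n * ((1 + ‖y - x'‖) ^ n * ‖p (y - x')‖) := by rw [mul_pow]; ring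
    _ ≤ 2 ^ n * C := by gcongr; exact hC (y - x')

theorem hasFDerivAt_integral_smul_comp_add_of_bounded [ν.IsAddHaarMeasure] (p : 𝓢(E, ℝ))
    (hψ : Continuous ψ) (hK : ∀ x, ‖ψ x‖ ≤ K) (x : E) :
    HasFDerivAt (fun x => ∫ y, p y • ψ (x + y) ∂ν)
      (∫ y, (-fderiv ℝ p y).smulRight (ψ (x + y)) ∂ν) x := by
  have hpc := p.continuous
  have hp' := (p.smooth 1).continuous_fderiv one_ne_zero
  obtain ⟨g, hg, hpg⟩ :=
    exists_integrable_norm_comp_sub_le (ν := ν) (SchwartzMap.fderivCLM ℝ E ℝ p) x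
  -- `ψ` is not differentiable: translating the variable of integration moves `x` into `p`.
  have hshift : (fun x => ∫ y, p y • ψ (x + y) ∂ν) = fun x => ∫ y, p (y - x) • ψ y ∂ν := by
    funext x
    simpa using integral_add_left_eq_self (μ := ν) (fun y => p (y - x) • ψ y) x
  have hshift' : ∫ y, (-fderiv ℝ p y).smulRight (ψ (x + y)) ∂ν =
      ∫ y, (-fderiv ℝ p (y - x)).smulRight (ψ y) ∂ν := by
    simpa using integral_add_left_eq_self (μ := ν)
      (fun y => (-fderiv ℝ p (y - x)).smulRight (ψ y)) x
  rw [hshift, hshift']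
  refine hasFDerivAt_integral_of_dominated_of_fderiv_le
    (F' := fun x y => (-fderiv ℝ p (y - x)).smulRight (ψ y)) (bound := fun y => g y * K)
    (ball_mem_nhds x one_pos)
    (.of_forall fun x => Continuous.aestronglyMeasurable (by fun_prop))
    ((p.integrable.comp_sub_right x).smul_bdd K hψ.aestronglyMeasurable (.of_forall hK))
    (Continuous.aestronglyMeasurable (by fun_prop))
    (.of_forall fun y x' hx' => ?_) (hg.mul_const K) (.of_forall fun y x' _ => ?_)
  · rw [ContinuousLinearMap.norm_smulRight_apply, norm_neg]
    gcongr
    · exact (norm_nonneg _).trans (hpg x' hx' y)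
    · exact hpg x' hx' y
    · exact hK y
  · have hsub : HasFDerivAt (fun x => p (y - x)) (-fderiv ℝ p (y - x')) x' := by
      simpa [Function.comp_def] using (p.differentiableAt (x := y - x')).hasFDerivAt.comp x'
        ((hasFDerivAt_id x').const_sub y)
    exact hsub.smul_const (ψ y)

theorem continuous_integral_fderiv_smulRight [ν.IsAddHaarMeasure] (p : 𝓢(E, ℝ))
    (hψ : Continuous ψ) (hK : ∀ x, ‖ψ x‖ ≤ K) :
    Continuous fun x => ∫ y, (-fderiv ℝ p y).smulRight (ψ (x + y)) ∂ν := by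
  have hp' := (p.smooth 1).continuous_fderiv one_ne_zero
  exact continuous_of_dominated (bound := fun y => K * ‖fderiv ℝ p y‖)
    (fun x => Continuous.aestronglyMeasurable (by fun_prop))
    (fun x => .of_forall (norm_fderiv_smulRight_le p hK x))
    ((integrable_fderiv_schwartzMap p).norm.const_mul K) (.of_forall fun y => by fun_prop)

theorem contDiff_two_integral_smul_comp_add [ν.IsAddHaarMeasure] (p : 𝓢(E, ℝ))
    (hφ : ContDiff ℝ 1 φ) (hK : ∀ x, ‖fderiv ℝ φ x‖ ≤ K) :
    ContDiff ℝ 2 (fun x => ∫ y, p y • φ (x + y) ∂ν) := by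
  have hφ' := hφ.continuous_fderiv one_ne_zero
  have hderiv₁ := hasFDerivAt_integral_smul_comp_add (ν := ν) p hφ hK
  have hderiv₂ := hasFDerivAt_integral_smul_comp_add_of_bounded (ν := ν) p hφ' hK
  rw [← one_add_one_eq_two, contDiff_succ_iff_fderiv, funext fun x => (hderiv₁ x).fderiv,
    contDiff_one_iff_fderiv, funext fun x => (hderiv₂ x).fderiv]
  exact ⟨fun x => (hderiv₁ x).differentiableAt, by simp, fun x => (hderiv₂ x).differentiableAt,
    continuous_integral_fderiv_smulRight p hφ' hK⟩

theorem norm_iteratedFDeriv_two_integral_smul_comp_add_le [ν.IsAddHaarMeasure] (p : 𝓢(E, ℝ))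
    (hφ : ContDiff ℝ 1 φ) (hK : ∀ x, ‖fderiv ℝ φ x‖ ≤ K) (x : E) :
    ‖iteratedFDeriv ℝ 2 (fun x => ∫ y, p y • φ (x + y) ∂ν) x‖ ≤ K * ∫ y, ‖fderiv ℝ p y‖ ∂ν := by
  have hφ' := hφ.continuous_fderiv one_ne_zero
  have hderiv₁ := hasFDerivAt_integral_smul_comp_add (ν := ν) p hφ hK
  have hderiv₂ := hasFDerivAt_integral_smul_comp_add_of_bounded (ν := ν) p hφ' hK
  rw [← norm_iteratedFDeriv_fderiv, norm_iteratedFDeriv_one,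
    funext fun x => (hderiv₁ x).fderiv, (hderiv₂ x).fderiv, ← integral_const_mul]
  exact norm_integral_le_of_norm_le ((integrable_fderiv_schwartzMap p).norm.const_mul K)
    (.of_forall (norm_fderiv_smulRight_le p hK x))

end Correlation

theorem stmt_9_general {d : ℕ} (hd : 0 < d) {α T : ℝ} (hα0 : 0 < α) (hα : α < 2) (hT : 0 < T) :
    ∃ C : ℝ, ∀ φ : EuclideanSpace ℝ (Fin d) → ℝ, ContDiff ℝ 1 φ →
      ∀ K : ℝ, (∀ x, ‖fderiv ℝ φ x‖ ≤ K) →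
        ∀ t : ℝ, 0 < t → t ≤ T →
          ContDiff ℝ 2 (Pt d α φ t) ∧
          ∀ x : EuclideanSpace ℝ (Fin d),
            ‖iteratedFDeriv ℝ 2 (Pt d α φ t) x‖ ≤ C * K * t ^ (-(1 / α)) := by
  refine ⟨T ^ (1 / α) * ∫ y, ‖fderiv ℝ (pdens d α T) y‖, fun φ hφ K hK t ht htT => ?_⟩
  have hK0 : 0 ≤ K := (norm_nonneg _).trans (hK 0)
  obtain ⟨p, hp⟩ := exists_schwartzMap_eq_pdens (d := d) hd hα0 hα ht
  have hPt : Pt d α φ t = fun x => ∫ y, p y • φ (x + y) := by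
    funext x
    simp only [Pt, hp, smul_eq_mul, mul_comm]
  rw [hPt]
  refine ⟨contDiff_two_integral_smul_comp_add p hφ hK, fun x => ?_⟩
  obtain ⟨r, hr, hr1, hrt, hrinv⟩ : ∃ r : ℝ, 0 < r ∧ r ≤ 1 ∧ r ^ α * T = t ∧
      r⁻¹ = T ^ (1 / α) * t ^ (-(1 / α)) := by
    refine ⟨(t / T) ^ (1 / α), by positivity,
      Real.rpow_le_one (by positivity) ((div_le_one hT).2 htT) (by positivity), ?_, ?_⟩
    · rw [one_div, Real.rpow_inv_rpow (by positivity) hα0.ne', div_mul_cancel₀ t hT.ne']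
    · rw [Real.div_rpow ht.le hT.le, Real.rpow_neg ht.le, inv_div, div_eq_mul_inv]
  calc ‖iteratedFDeriv ℝ 2 (fun x => ∫ y, p y • φ (x + y)) x‖
      ≤ K * ∫ y, ‖fderiv ℝ (pdens d α t) y‖ :=
        hp ▸ norm_iteratedFDeriv_two_integral_smul_comp_add_le p hφ hK x
    _ ≤ K * (r⁻¹ * ∫ y, ‖fderiv ℝ (pdens d α T) y‖) := by
        rw [← hrt]
        gcongr
        exact integral_norm_fderiv_pdens_rpow_mul_le hd hα0 hα hT hr hr1
    _ = T ^ (1 / α) * (∫ y, ‖fderiv ℝ (pdens d α T) y‖) * K * t ^ (-(1 / α)) := by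
        rw [hrinv]
        ring

/-- Hessian estimate `‖D²(P_t φ)‖_∞ ≤ C ‖Dφ‖_∞ t^{-1/α}` for bounded `C¹` functions `φ`
with bounded gradient. -/
theorem stmt_9 (d : ℕ) (hd : 2 ≤ d) (α T : ℝ) (hα1 : 1 < α) (hα2 : α < 2) (hT : 0 < T) :
    ∃ C : ℝ, ∀ φ : EuclideanSpace ℝ (Fin d) → ℝ, ContDiff ℝ 1 φ →
      (∃ M₀ : ℝ, ∀ x, |φ x| ≤ M₀) →
      ∀ K : ℝ, (∀ x, ‖fderiv ℝ φ x‖ ≤ K) →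
        ∀ t : ℝ, 0 < t → t ≤ T →
          ContDiff ℝ 2 (Pt d α φ t) ∧
          ∀ x : EuclideanSpace ℝ (Fin d),
            ‖iteratedFDeriv ℝ 2 (Pt d α φ t) x‖ ≤ C * K * t ^ (-(1 / α)) := by
  obtain ⟨C, hC⟩ := stmt_9_general (d := d) (by omega) (by linarith) hα2 hT
  exact ⟨C, fun φ hφ _ => hC φ hφ⟩
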